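/- For every K > 1 there exists C > 0 (depending only on K) such that the following holds. Let G = (V,E) be a finite simple graph on n vertices with maximum degree at most Δ, where Δ ≥ 3 is an integer, and let μ be the hardcore model on G with fugacities satisfying λ_v ≤ λ_Δ for all v. Let ν_0 be any probability distribution on 2^V supported on independent sets of G, and let v_1, …, v_t be any finite sequence of vertices (repetitions allowed) such that (i) for every vertex v, the number of appearances of neighbors of v in the sequence after the last appearance of v is at most K·Δ, and (ii) every vertex of V appears at least once. Let ν = ν_0 P_{v_1} P_{v_2} ⋯ P_{v_t}. Then for every vertex v ∈ V and every independent set σ⁻ ⊆ V with v ∉ σ⁻, writing σ⁺ = σ⁻ ∪ {v}, one has ν(σ⁺) ≤ C·λ_v·ν(σ⁻). -/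

import Mathlib

/-!
Write `v`'s last update as a splitting `l = l₁ ++ v :: l₂` with `v ∉ l₂`.  Immediately after the
update at `v`, the configurations `insert v σ` and `σ` were produced from the same pre-images, so
their masses are in the ratio `μ (insert v σ) / μ σ ≤ λ_v` (`step_self`).  Every later update is at
some `u ≠ v`.  If `u` is not a neighbor of `v`, the transition probabilities into `insert v σ` and
into `σ` agree whenever the former is independent.  If `u` is a neighbor of `v`, then
`insert v σ` forces `u` to be empty, an event of probability at least `1 / (1 + λ_u)` when `v` is
empty; so the ratio of masses grows by a factor of at most `1 + λ_Δ` (`frac_le`, `step_other`).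

There are at most `K Δ` updates of the second kind, whence the final ratio is at most
`λ_v (1 + λ_Δ)^{K Δ} ≤ λ_v exp (K Δ λ_Δ)`, and `Δ λ_Δ ≤ 6 e` for all `Δ ≥ 3` (`hcCrit_bound`).
Thus `C = exp (6 e K)` works.
-/

open Finset

noncomputable section
attribute [local instance] Classical.propDecidable

/-- Push a distribution `ν` one step through a Markov transition matrix `P`. -/
def stepDist {Ω : Type*} [Fintype Ω] (ν : Ω → ℝ) (P : Ω → Ω → ℝ) : Ω → ℝ :=
  fun y => ∑ x, ν x * P x y

variable {V : Type*} [Fintype V] [DecidableEq V]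

/-- `σ` is an independent set of `G`: no two of its elements are adjacent. -/
def IndepSet (G : SimpleGraph V) (σ : Finset V) : Prop :=
  ∀ u ∈ σ, ∀ w ∈ σ, ¬ G.Adj u w

/-- Unnormalized hardcore weight of `σ`: `∏_{v ∈ σ} λ_v` if `σ` is independent, else `0`. -/
def hcWeight (G : SimpleGraph V) (lam : V → ℝ) (σ : Finset V) : ℝ :=
  if IndepSet G σ then ∏ v ∈ σ, lam v else 0

/-- The hardcore model on `G` with fugacities `lam`, as a distribution on `Finset V`. -/
def hardcore (G : SimpleGraph V) (lam : V → ℝ) (σ : Finset V) : ℝ :=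
  hcWeight G lam σ / ∑ τ : Finset V, hcWeight G lam τ

/-- The tree-uniqueness threshold `λ_Δ = (Δ−1)^{Δ−1}/(Δ−2)^Δ`. -/
def hcCrit (Δ : ℕ) : ℝ := ((Δ : ℝ) - 1) ^ (Δ - 1) / ((Δ : ℝ) - 2) ^ Δ

/-- Glauber single-site update at `v`: resample the membership of `v` from the
conditional distribution of `μ` given the configuration on `V ∖ {v}`. -/
def siteUpdate (μ : Finset V → ℝ) (v : V) (σ τ : Finset V) : ℝ :=
  if τ.erase v = σ.erase v then
    μ τ / (μ (insert v (σ.erase v)) + μ (σ.erase v))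
  else 0

/-- Push a distribution through the single-site updates along the list `l`. -/
def scanDist (μ : Finset V → ℝ) (l : List V) (ν : Finset V → ℝ) : Finset V → ℝ :=
  l.foldl (fun ρ v => stepDist ρ (siteUpdate μ v)) ν

/-! ### The critical fugacity is `O(1/Δ)` -/

lemma hcCrit_nonneg (D : ℕ) (hD : 3 ≤ D) : 0 ≤ hcCrit D := by
  have h : (3 : ℝ) ≤ D := by exact_mod_cast hD
  unfold hcCrit
  have h1 : (0 : ℝ) ≤ (D : ℝ) - 1 := by linarith
  have h2 : (0 : ℝ) ≤ (D : ℝ) - 2 := by linarith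
  positivity

lemma hcCrit_bound (D : ℕ) (hD : 3 ≤ D) : D * hcCrit D ≤ 6 * Real.exp 1 := by
  obtain ⟨m, rfl⟩ : ∃ m, D = m + 3 := ⟨D - 3, by omega⟩
  unfold hcCrit
  have e1 : ((m + 3 : ℕ) : ℝ) - 1 = ((m : ℝ) + 1) + 1 := by push_cast; ring
  have e2 : ((m + 3 : ℕ) : ℝ) - 2 = (m : ℝ) + 1 := by push_cast; ring
  have e3 : m + 3 - 1 = m + 2 := by omega
  rw [e1, e2, e3]
  have hm : (0 : ℝ) ≤ m := Nat.cast_nonneg m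
  have hx : (0 : ℝ) < (m : ℝ) + 1 := by linarith
  -- `(1 + 1/x)^x ≤ e` in the cleared form `(x + 1)^x ≤ e x^x`, with `x = Δ - 2`
  have key : ((m : ℝ) + 1 + 1) ^ (m + 1) ≤ Real.exp 1 * ((m : ℝ) + 1) ^ (m + 1) := by
    have h1 : 1 + ((m : ℝ) + 1)⁻¹ ≤ Real.exp (((m : ℝ) + 1)⁻¹) := by
      have := Real.add_one_le_exp (((m : ℝ) + 1)⁻¹)
      linarith
    have h2 : (1 + ((m : ℝ) + 1)⁻¹) ^ (m + 1) ≤ Real.exp 1 := by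
      calc _ ≤ (Real.exp (((m : ℝ) + 1)⁻¹)) ^ (m + 1) :=
            pow_le_pow_left₀ (by positivity) h1 _
        _ = Real.exp 1 := by
            rw [← Real.exp_nat_mul]
            congr 1
            push_cast
            field_simp
    calc ((m : ℝ) + 1 + 1) ^ (m + 1)
        = ((1 + ((m : ℝ) + 1)⁻¹) * ((m : ℝ) + 1)) ^ (m + 1) := by
          congr 1
          field_simp
      _ = (1 + ((m : ℝ) + 1)⁻¹) ^ (m + 1) * ((m : ℝ) + 1) ^ (m + 1) := mul_pow _ _ _
      _ ≤ _ := by gcongr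
  rw [← mul_div_assoc, div_le_iff₀ (by positivity)]
  push_cast
  have hq : ((m : ℝ) + 3) * ((m : ℝ) + 1 + 1) ≤ 6 * ((m : ℝ) + 1) ^ 2 := by nlinarith
  calc ((m : ℝ) + 3) * ((m : ℝ) + 1 + 1) ^ (m + 2)
      = (((m : ℝ) + 3) * ((m : ℝ) + 1 + 1)) * ((m : ℝ) + 1 + 1) ^ (m + 1) := by ring
    _ ≤ (6 * ((m : ℝ) + 1) ^ 2) * (Real.exp 1 * ((m : ℝ) + 1) ^ (m + 1)) := by gcongr
    _ = 6 * Real.exp 1 * ((m : ℝ) + 1) ^ (m + 3) := by ring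

/-! ### Hardcore weights -/

section Hardcore

variable {V : Type} [Fintype V] [DecidableEq V]

lemma partition_pos (G : SimpleGraph V) (lam : V → ℝ) (hl : ∀ v, 0 < lam v) :
    0 < ∑ τ : Finset V, hcWeight G lam τ := by
  refine Finset.sum_pos' (fun τ _ => ?_) ⟨∅, Finset.mem_univ _, ?_⟩
  · unfold hcWeight
    split_ifs
    · exact Finset.prod_nonneg fun v _ => (hl v).le
    · exact le_rfl
  · unfold hcWeight
    rw [if_pos (by intro u hu; simp at hu)]
    simp

lemma hardcore_pos (G : SimpleGraph V) (lam : V → ℝ) (hl : ∀ v, 0 < lam v)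
    (σ : Finset V) (h : IndepSet G σ) : 0 < hardcore G lam σ := by
  unfold hardcore
  refine div_pos ?_ (partition_pos G lam hl)
  rw [hcWeight, if_pos h]
  exact Finset.prod_pos fun v _ => hl v

lemma hardcore_zero (G : SimpleGraph V) (lam : V → ℝ)
    (σ : Finset V) (h : ¬ IndepSet G σ) : hardcore G lam σ = 0 := by
  simp [hardcore, hcWeight, h]

lemma hardcore_nonneg (G : SimpleGraph V) (lam : V → ℝ) (hl : ∀ v, 0 < lam v)
    (σ : Finset V) : 0 ≤ hardcore G lam σ := by
  by_cases h : IndepSet G σ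
  · exact (hardcore_pos G lam hl σ h).le
  · exact (hardcore_zero G lam σ h).ge

lemma indepSet_insert (G : SimpleGraph V) (v : V) (σ : Finset V) :
    IndepSet G (insert v σ) ↔ IndepSet G σ ∧ ∀ u ∈ σ, ¬ G.Adj v u := by
  constructor
  · intro h
    exact ⟨fun u hu w hw => h u (mem_insert_of_mem hu) w (mem_insert_of_mem hw),
      fun u hu => h v (mem_insert_self _ _) u (mem_insert_of_mem hu)⟩
  · rintro ⟨h, hv⟩ u hu w hw
    rcases Finset.mem_insert.1 hu with rfl | hu' <;> rcases Finset.mem_insert.1 hw with rfl | hw'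
    · exact G.irrefl
    · exact hv w hw'
    · exact fun hh => hv u hu' hh.symm
    · exact h u hu' w hw'

lemma hardcore_insert (G : SimpleGraph V) (lam : V → ℝ)
    (v : V) (σ : Finset V) (hv : v ∉ σ) (h : ∀ u ∈ σ, ¬ G.Adj v u) :
    hardcore G lam (insert v σ) = lam v * hardcore G lam σ := by
  by_cases hi : IndepSet G σ
  · have h2 : IndepSet G (insert v σ) := (indepSet_insert G v σ).2 ⟨hi, h⟩
    simp only [hardcore, hcWeight, if_pos hi, if_pos h2]
    rw [Finset.prod_insert hv, mul_div_assoc]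
  · have h2 : ¬ IndepSet G (insert v σ) := fun hh => hi ((indepSet_insert G v σ).1 hh).1
    rw [hardcore_zero G lam _ hi, hardcore_zero G lam _ h2, mul_zero]

lemma hardcore_insert_le (G : SimpleGraph V) (lam : V → ℝ) (hl : ∀ v, 0 < lam v)
    (v : V) (σ : Finset V) (hv : v ∉ σ) :
    hardcore G lam (insert v σ) ≤ lam v * hardcore G lam σ := by
  by_cases h : IndepSet G (insert v σ)
  · exact (hardcore_insert G lam v σ hv ((indepSet_insert G v σ).1 h).2).le
  · rw [hardcore_zero G lam _ h]
    exact mul_nonneg (hl v).le (hardcore_nonneg G lam hl σ)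

/-! ### Effect of a single update on the ratio of masses -/

/-- Only `τ ∖ {u}` and `τ ∪ {u}` lead to `τ` under an update at `u`, and both do so with the same
probability. -/
lemma step_eq (μ ρ : Finset V → ℝ) (u : V) (τ : Finset V) :
    stepDist ρ (siteUpdate μ u) τ =
      μ τ / (μ (insert u τ) + μ (τ.erase u)) * (ρ (insert u τ) + ρ (τ.erase u)) := by
  have hins : insert u (τ.erase u) = insert u τ := by
    ext x; by_cases hx : x = u <;> simp [hx]
  have hers : (insert u τ).erase u = τ.erase u := by
    ext x; by_cases hx : x = u <;> simp [hx]
  have hne : insert u τ ≠ τ.erase u := by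
    intro h
    have := mem_insert_self u τ
    rw [h] at this
    simp at this
  unfold stepDist
  rw [← Finset.sum_subset (Finset.subset_univ ({insert u τ, τ.erase u} : Finset (Finset V)))]
  · rw [Finset.sum_pair hne]
    simp only [siteUpdate, hers, Finset.erase_idem, hins, if_true]
    ring
  · intro x _ hx
    have : ¬ (τ.erase u = x.erase u) := by
      intro h
      apply hx
      rw [Finset.mem_insert, Finset.mem_singleton]
      by_cases hu : u ∈ x
      · left
        rw [← hins, h, Finset.insert_erase hu]
      · right
        rw [h, Finset.erase_eq_of_notMem hu]
    simp [siteUpdate, this]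

lemma step_nonneg (μ ρ : Finset V → ℝ) (hμ : ∀ σ, 0 ≤ μ σ) (hρ : ∀ σ, 0 ≤ ρ σ) (u : V)
    (τ : Finset V) : 0 ≤ stepDist ρ (siteUpdate μ u) τ := by
  rw [step_eq]
  exact mul_nonneg (div_nonneg (hμ _) (add_nonneg (hμ _) (hμ _))) (add_nonneg (hρ _) (hρ _))

lemma scan_nonneg (μ : Finset V → ℝ) (hμ : ∀ σ, 0 ≤ μ σ) (l : List V) :
    ∀ ρ : Finset V → ℝ, (∀ σ, 0 ≤ ρ σ) → ∀ σ, 0 ≤ scanDist μ l ρ σ := by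
  induction l with
  | nil => intro ρ hρ; exact hρ
  | cons u l ih => intro ρ hρ; exact ih _ (step_nonneg μ ρ hμ hρ u)

lemma step_self (G : SimpleGraph V) (lam : V → ℝ) (hl : ∀ v, 0 < lam v) (ρ : Finset V → ℝ)
    (hρ : ∀ σ, 0 ≤ ρ σ) (v : V) (σ : Finset V) (hv : v ∉ σ) :
    stepDist ρ (siteUpdate (hardcore G lam) v) (insert v σ) ≤
      lam v * stepDist ρ (siteUpdate (hardcore G lam) v) σ := by
  have hμ := hardcore_nonneg G lam hl
  rw [step_eq, step_eq, Finset.insert_idem, Finset.erase_insert hv, Finset.erase_eq_of_notMem hv,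
    ← mul_assoc, ← mul_div_assoc]
  refine mul_le_mul_of_nonneg_right ?_ (add_nonneg (hρ _) (hρ _))
  exact div_le_div_of_nonneg_right (hardcore_insert_le G lam hl v σ hv)
    (add_nonneg (hμ _) (hμ _))

/-- Comparison of the transition probabilities, under an update at `u ≠ v`, into a configuration
with `v` occupied and into the same configuration with `v` removed. -/
lemma frac_le (G : SimpleGraph V) (lam : V → ℝ) (hl : ∀ v, 0 < lam v) (L : ℝ) (hL : 0 ≤ L)
    (hlam : ∀ v, lam v ≤ L) (u v : V) (huv : u ≠ v) (σ : Finset V) (hv : v ∉ σ)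
    (k : ℝ) (hk : k = if G.Adj v u then 1 + L else 1) :
    hardcore G lam (insert v σ) /
        (hardcore G lam (insert u (insert v σ)) + hardcore G lam ((insert v σ).erase u)) ≤
      k * (hardcore G lam σ / (hardcore G lam (insert u σ) + hardcore G lam (σ.erase u))) := by
  have hμ := hardcore_nonneg G lam hl
  have hk0 : 0 ≤ k := by
    rw [hk]; split_ifs <;> linarith
  by_cases hi : IndepSet G (insert v σ)
  swap
  · rw [hardcore_zero G lam _ hi, zero_div]
    exact mul_nonneg hk0 (div_nonneg (hμ _) (add_nonneg (hμ _) (hμ _)))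
  obtain ⟨hσ, hadj⟩ := (indepSet_insert G v σ).1 hi
  have hpos := hardcore_pos G lam hl σ hσ
  by_cases ha : G.Adj v u
  · rw [if_pos ha] at hk
    have hu : u ∉ σ := fun h => hadj u h ha
    have hu' : u ∉ insert v σ := by simp [huv, hu]
    have h0 : hardcore G lam (insert u (insert v σ)) = 0 := by
      apply hardcore_zero
      intro h
      exact h v (by simp) u (by simp) ha
    rw [h0, Finset.erase_eq_of_notMem hu', Finset.erase_eq_of_notMem hu, zero_add,
      div_self (hardcore_pos G lam hl _ hi).ne', ← mul_div_assoc,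
      le_div_iff₀ (add_pos_of_nonneg_of_pos (hμ _) hpos), hk]
    have h1 := hardcore_insert_le G lam hl u σ hu
    have h2 := mul_le_mul_of_nonneg_right (hlam u) hpos.le
    linarith
  · rw [if_neg ha] at hk
    have h1 : hardcore G lam (insert u (insert v σ)) = lam v * hardcore G lam (insert u σ) := by
      rw [Finset.insert_comm]
      apply hardcore_insert
      · simp [huv.symm, hv]
      · intro w hw
        rcases Finset.mem_insert.1 hw with rfl | hw
        · exact ha
        · exact hadj w hw
    have h2 : hardcore G lam ((insert v σ).erase u) = lam v * hardcore G lam (σ.erase u) := by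
      rw [Finset.erase_insert_of_ne huv.symm]
      apply hardcore_insert
      · simp [hv]
      · intro w hw
        exact hadj w (Finset.mem_of_mem_erase hw)
    rw [h1, h2, hardcore_insert G lam v σ hv hadj, ← mul_add,
      mul_div_mul_left _ _ (hl v).ne', hk, one_mul]

lemma step_other (G : SimpleGraph V) (lam : V → ℝ) (hl : ∀ v, 0 < lam v) (L : ℝ) (hL : 0 ≤ L)
    (hlam : ∀ v, lam v ≤ L) (u v : V) (huv : u ≠ v) (ρ : Finset V → ℝ) (hρ : ∀ σ, 0 ≤ ρ σ)
    (c : ℝ) (hc : ∀ σ, v ∉ σ → ρ (insert v σ) ≤ c * ρ σ)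
    (k : ℝ) (hk : k = if G.Adj v u then 1 + L else 1) (σ : Finset V) (hv : v ∉ σ) :
    stepDist ρ (siteUpdate (hardcore G lam) u) (insert v σ) ≤
      (k * c) * stepDist ρ (siteUpdate (hardcore G lam) u) σ := by
  have hμ := hardcore_nonneg G lam hl
  have hk0 : 0 ≤ k := by
    rw [hk]; split_ifs <;> linarith
  have hF := frac_le G lam hl L hL hlam u v huv σ hv k hk
  rw [step_eq, step_eq]
  have hS : ρ (insert u (insert v σ)) + ρ ((insert v σ).erase u) ≤
      c * (ρ (insert u σ) + ρ (σ.erase u)) := by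
    rw [Finset.insert_comm, Finset.erase_insert_of_ne huv.symm, mul_add]
    exact add_le_add (hc _ (by simp [huv.symm, hv])) (hc _ (by simp [hv]))
  calc _ ≤ (k * (hardcore G lam σ / (hardcore G lam (insert u σ) + hardcore G lam (σ.erase u)))) *
        (c * (ρ (insert u σ) + ρ (σ.erase u))) :=
        mul_le_mul hF hS (add_nonneg (hρ _) (hρ _))
          (mul_nonneg hk0 (div_nonneg (hμ _) (add_nonneg (hμ _) (hμ _))))
    _ = _ := by ring

/-- Along updates avoiding `v`, a bound `c` on the ratio of the masses of `insert v σ` and `σ`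
deteriorates by one factor `1 + L` per updated neighbor of `v`. -/
lemma scan_other (G : SimpleGraph V) [DecidableRel G.Adj] (lam : V → ℝ) (hl : ∀ v, 0 < lam v)
    (L : ℝ) (hL : 0 ≤ L) (hlam : ∀ v, lam v ≤ L) (v : V) (l : List V) (hvl : v ∉ l) :
    ∀ (ρ : Finset V → ℝ), (∀ σ, 0 ≤ ρ σ) → ∀ c : ℝ,
      (∀ σ, v ∉ σ → ρ (insert v σ) ≤ c * ρ σ) →
      ∀ σ, v ∉ σ → scanDist (hardcore G lam) l ρ (insert v σ) ≤
        ((1 + L) ^ (l.filter fun u => G.Adj v u).length * c) *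
          scanDist (hardcore G lam) l ρ σ := by
  induction l with
  | nil =>
    intro ρ _ c hc σ hσ
    simpa [scanDist] using hc σ hσ
  | cons u l ih =>
    intro ρ hρ c hc σ hσ
    rw [List.mem_cons, not_or] at hvl
    have hs := step_other G lam hl L hL hlam u v (Ne.symm hvl.1) ρ hρ c hc _ rfl
    have := ih hvl.2 _ (step_nonneg _ ρ (hardcore_nonneg G lam hl) hρ u) _ hs σ hσ
    refine this.trans (le_of_eq ?_)
    change _ = _ * scanDist (hardcore G lam) l (stepDist ρ (siteUpdate (hardcore G lam) u)) σ
    congr 1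
    by_cases ha : G.Adj v u
    · simp [ha, pow_succ, mul_assoc]
    · simp [ha]

end Hardcore

/-! ### The bound for a whole update sequence -/

lemma exists_last_occurrence {α : Type*} (v : α) (l : List α) (h : v ∈ l) :
    ∃ l₁ l₂, l = l₁ ++ v :: l₂ ∧ v ∉ l₂ := by
  induction l with
  | nil => simp at h
  | cons a l ih =>
    by_cases hv : v ∈ l
    · obtain ⟨l₁, l₂, rfl, h2⟩ := ih hv
      exact ⟨a :: l₁, l₂, rfl, h2⟩
    · have : v = a := by simpa [hv] using h
      exact ⟨[], l, by simp [this], hv⟩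

/-- `C·λ_v`-boundedness of the distribution obtained by applying a
sequence of single-site updates in which (i) at most `K·Δ` neighbors of each vertex
are updated after its last update and (ii) every vertex is updated at least once. -/
theorem update_sequence_bounded :
    ∀ K : ℝ, 1 < K →
    ∃ C : ℝ, 0 < C ∧
      ∀ (V : Type) [Fintype V] [DecidableEq V] (G : SimpleGraph V)
        [DecidableRel G.Adj] (Δ : ℕ), 3 ≤ Δ →
        (∀ v : V, G.degree v ≤ Δ) →
        ∀ lam : V → ℝ, (∀ v, 0 < lam v) → (∀ v, lam v ≤ hcCrit Δ) →
        ∀ ν₀ : Finset V → ℝ, (∀ σ, 0 ≤ ν₀ σ) → (∑ σ : Finset V, ν₀ σ) = 1 →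
          (∀ σ, ¬ IndepSet G σ → ν₀ σ = 0) →
        ∀ l : List V,
          (∀ (v : V) (l₁ l₂ : List V), l = l₁ ++ v :: l₂ → v ∉ l₂ →
            ((l₂.filter fun u => G.Adj v u).length : ℝ) ≤ K * Δ) →
          (∀ v : V, v ∈ l) →
        ∀ (v : V) (σm : Finset V), IndepSet G σm → v ∉ σm →
          scanDist (hardcore G lam) l ν₀ (insert v σm) ≤
            C * lam v * scanDist (hardcore G lam) l ν₀ σm := by
  intro K hK
  refine ⟨Real.exp (K * (6 * Real.exp 1)), Real.exp_pos _, ?_⟩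
  intro V _ _ G _ D hD _ lam hl hlam ν₀ hν₀ _ _ l hcount hmem v σ _ hvσ
  have hμ := hardcore_nonneg G lam hl
  have hL := hcCrit_nonneg D hD
  obtain ⟨l₁, l₂, rfl, hv2⟩ := exists_last_occurrence v l (hmem v)
  have hc := hcount v l₁ l₂ rfl hv2
  have hscan : scanDist (hardcore G lam) (l₁ ++ v :: l₂) ν₀ =
      scanDist (hardcore G lam) l₂ (stepDist (scanDist (hardcore G lam) l₁ ν₀)
        (siteUpdate (hardcore G lam) v)) := by
    simp [scanDist, List.foldl_append]
  rw [hscan]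
  have hρ := scan_nonneg _ hμ l₁ ν₀ hν₀
  have hρ' := step_nonneg _ _ hμ hρ v
  refine (scan_other G lam hl (hcCrit D) hL hlam v l₂ hv2 _ hρ' (lam v)
    (fun τ hτ => step_self G lam hl _ hρ v τ hτ) σ hvσ).trans ?_
  refine mul_le_mul_of_nonneg_right ?_ (scan_nonneg _ hμ l₂ _ hρ' σ)
  refine mul_le_mul_of_nonneg_right ?_ (hl v).le
  set N := (l₂.filter fun u => G.Adj v u).length
  calc (1 + hcCrit D) ^ N ≤ (Real.exp (hcCrit D)) ^ N := by
        refine pow_le_pow_left₀ (by linarith) ?_ _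
        have := Real.add_one_le_exp (hcCrit D)
        linarith
    _ = Real.exp (N * hcCrit D) := (Real.exp_nat_mul _ _).symm
    _ ≤ _ := by
        apply Real.exp_le_exp.2
        calc (N : ℝ) * hcCrit D ≤ (K * D) * hcCrit D := by gcongr
          _ = K * (D * hcCrit D) := by ring
          _ ≤ _ := by
            have := hcCrit_bound D hD
            gcongr
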